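/- arXiv:2310.02912 — 2 statements merged into one kernel-verified Lean document; each statement's English description precedes it below -/
import Mathlib

section
/- Let M be an absolutely indecomposable, locally free representation of a quiver Q over O_α = F_q[t]/(t^α) of rank vector r. Then #Aut(M) = (1 − q^{-1}) · #End(M) = q^{α⟨r,r⟩} · (1 − q^{-1}) · #Ext^1(M, M). -/
/-!
In a finite-dimensional algebra without nontrivial idempotents every element is a unit or nilpotent
(Fitting). Over the algebraic closure each endomorphism `φ` has a spectral value `c`, so `φ - c` is
nilpotent. If `φ` is defined over `F_q`, then raising to a large power of the characteristic turns
this into `φ ^ p ^ n = c ^ p ^ n`, which forces `c ∈ F_q` because `F_q` is perfect.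

Hence every element of `End(M)` is uniquely a scalar in `F_q` plus a nilpotent, and it is a unit
precisely when the scalar is nonzero, which gives the first equality. The second is
rank-nullity for the complex whose kernel is `End(M)` and whose cokernel is `Ext¹(M, M)`.
-/

/-- A quiver: a set of vertices, a set of arrows, with source and target maps. -/
structure Quiv where
  V : Type
  A : Type
  s : A → V
  t : A → V

/-- The truncated polynomial ring `O_α = K[t]/(t^α)`. -/
abbrev Oalpha (K : Type) [Field K] (α : ℕ) : Type :=
  Polynomial K ⧸ Ideal.span {(Polynomial.X : Polynomial K) ^ α}

/-- The standard complex computing `End(M)` and `Ext¹(M, M)` for the locally free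
representation `M` of rank vector `r` given by the matrices `x`: the `K`-linear map
`⊕_i Hom(M_i, M_i) → ⊕_{a : i → j} Hom(M_i, M_j)`,
`φ ↦ (φ_{t a} ∘ x_a − x_a ∘ φ_{s a})_a`.  Its kernel is `End(M)` and its cokernel
is `Ext¹(M, M)`. -/
noncomputable def dMap (K : Type) [Field K] (α : ℕ) (Q : Quiv) (r : Q.V → ℕ)
    (x : ∀ a : Q.A, Matrix (Fin (r (Q.t a))) (Fin (r (Q.s a))) (Oalpha K α)) :
    (∀ i : Q.V, Matrix (Fin (r i)) (Fin (r i)) (Oalpha K α)) →ₗ[K]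
      (∀ a : Q.A, Matrix (Fin (r (Q.t a))) (Fin (r (Q.s a))) (Oalpha K α)) where
  toFun φ := fun a => φ (Q.t a) * x a - x a * φ (Q.s a)
  map_add' φ ψ := by
    funext a
    simp only [Pi.add_apply, Matrix.add_mul, Matrix.mul_add]
    abel
  map_smul' c φ := by
    funext a
    simp [Matrix.smul_mul, Matrix.mul_smul, smul_sub]


/-- The endomorphism ring `End(M)` of the representation `M` corresponding to `x`:
tuples of matrices commuting with all the structure maps. -/
def EndOf (Q : Quiv) (r : Q.V → ℕ) (R : Type) [CommRing R]
    (x : ∀ a : Q.A, Matrix (Fin (r (Q.t a))) (Fin (r (Q.s a))) R) : Type :=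
  {φ : ∀ i : Q.V, Matrix (Fin (r i)) (Fin (r i)) R //
    ∀ a : Q.A, φ (Q.t a) * x a = x a * φ (Q.s a)}

open Matrix in
/-- The automorphism group `Aut(M)` of the representation corresponding to `x`:
tuples of invertible matrices commuting with all the structure maps. -/
def AutOf (Q : Quiv) (r : Q.V → ℕ) (R : Type) [CommRing R]
    (x : ∀ a : Q.A, Matrix (Fin (r (Q.t a))) (Fin (r (Q.s a))) R) : Type :=
  {g : ∀ i : Q.V, GL (Fin (r i)) R //
    ∀ a : Q.A, (g (Q.t a) : Matrix _ _ R) * x a = x a * (g (Q.s a) : Matrix _ _ R)}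

/-- A locally free representation (given by matrices `x` over a ring `R`) is
indecomposable if it is nonzero and admits no idempotent endomorphism other than `0`
and the identity (equivalently, it is not the direct sum of two nonzero
subrepresentations). -/
def IsIndecomposable (Q : Quiv) (r : Q.V → ℕ) (R : Type) [CommRing R]
    (x : ∀ a : Q.A, Matrix (Fin (r (Q.t a))) (Fin (r (Q.s a))) R) : Prop :=
  (∃ i : Q.V, r i ≠ 0) ∧
    ∀ φ : ∀ i : Q.V, Matrix (Fin (r i)) (Fin (r i)) R,
      (∀ a : Q.A, φ (Q.t a) * x a = x a * φ (Q.s a)) →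
      (∀ i : Q.V, φ i * φ i = φ i) →
      (∀ i : Q.V, φ i = 0) ∨ (∀ i : Q.V, φ i = 1)

/-- The ring homomorphism `K[t]/(t^α) → L[t]/(t^α)` induced by a field embedding
`K → L` (base change of truncated polynomial rings). -/
noncomputable def truncBaseChange (K L : Type) [Field K] [Field L] (f : K →+* L)
    (α : ℕ) : Oalpha K α →+* Oalpha L α :=
  Ideal.quotientMap (Ideal.span {(Polynomial.X : Polynomial L) ^ α})
    (Polynomial.mapRingHom f)
    (by rw [← Ideal.map_le_iff_le_comap, Ideal.map_span, Set.image_singleton]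
        simp)

/-- A representation over `O_α = F_q[t]/(t^α)` is absolutely indecomposable if its
base change to `F̄_q[t]/(t^α)` is indecomposable. -/
noncomputable def IsAbsolutelyIndecomposable (K : Type) [Field K] (α : ℕ) (Q : Quiv)
    (r : Q.V → ℕ)
    (x : ∀ a : Q.A, Matrix (Fin (r (Q.t a))) (Fin (r (Q.s a))) (Oalpha K α)) : Prop :=
  IsIndecomposable Q r (Oalpha (AlgebraicClosure K) α)
    (fun a => (x a).map
      (truncBaseChange K (AlgebraicClosure K) (algebraMap K (AlgebraicClosure K)) α))

open Polynomial

section Fitting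

theorem aeval_eq_zero_or_of_isCoprime {R A : Type*} [CommRing R] [Ring A] [Algebra R A]
    (hA : ∀ e : A, IsIdempotentElem e → e = 0 ∨ e = 1) {a : A} {f g : R[X]}
    (hfg : IsCoprime f g) (ha : aeval a (f * g) = 0) : aeval a f = 0 ∨ aeval a g = 0 := by
  obtain ⟨u, v, huv⟩ := hfg
  have aeval_mul_fg (w : R[X]) : aeval a (w * (f * g)) = 0 := by rw [map_mul, ha, mul_zero]
  have idem : IsIdempotentElem (aeval a (v * g)) := by
    have : v * g * (v * g) = v * g - u * v * (f * g) := by linear_combination (v * g) * huv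
    rw [IsIdempotentElem, ← map_mul, this, map_sub, aeval_mul_fg, sub_zero]
  rcases hA _ idem with h0 | h1
  · right
    have : g = u * (f * g) + g * (v * g) := by linear_combination (-g) * huv
    rw [this, map_add, aeval_mul_fg, map_mul, h0, mul_zero, add_zero]
  · left
    calc aeval a f = aeval a f * aeval a (v * g) := by rw [h1, mul_one]
      _ = aeval a (v * (f * g)) := by rw [← map_mul, mul_left_comm]
      _ = 0 := aeval_mul_fg v

theorem isUnit_or_isNilpotent_of_isAlgebraic {F A : Type*} [Field F] [Ring A] [Algebra F A]
    (hA : ∀ e : A, IsIdempotentElem e → e = 0 ∨ e = 1) {a : A} (ha : IsAlgebraic F a) :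
    IsUnit a ∨ IsNilpotent a := by
  obtain ⟨P, hP, hPa⟩ := ha
  obtain ⟨g, hg, hXg⟩ := exists_eq_pow_rootMultiplicity_mul_and_not_dvd P hP 0
  rw [C_0, sub_zero] at hg hXg
  have hcop : IsCoprime X g := irreducible_X.coprime_iff_not_dvd.2 hXg
  rcases aeval_eq_zero_or_of_isCoprime hA hcop.pow_left (hg ▸ hPa) with hnil | hga
  · exact Or.inr ⟨_, by rwa [map_pow, aeval_X] at hnil⟩
  · left
    obtain ⟨u, v, huv⟩ := hcop
    have inv_left : aeval a u * a = 1 := by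
      simpa [hga] using congrArg (aeval a) huv
    have inv_right : a * aeval a u = 1 := by
      simpa [hga, mul_comm u] using congrArg (aeval a) huv
    exact ⟨⟨a, aeval a u, inv_right, inv_left⟩, rfl⟩

theorem exists_isNilpotent_sub_algebraMap_of_isAlgClosed {F A : Type*} [Field F] [IsAlgClosed F]
    [Ring A] [Algebra F A] [Module.Finite F A] [Nontrivial A]
    (hA : ∀ e : A, IsIdempotentElem e → e = 0 ∨ e = 1) (a : A) :
    ∃ c : F, IsNilpotent (a - algebraMap F A c) := by
  obtain ⟨c, hc⟩ := spectrum.nonempty_of_isAlgClosed_of_finiteDimensional F a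
  refine ⟨c, (isUnit_or_isNilpotent_of_isAlgebraic hA (Algebra.IsAlgebraic.isAlgebraic (R := F) _)
    ).resolve_left fun hu => ?_⟩
  exact spectrum.mem_iff.1 hc (neg_sub a _ ▸ hu.neg)

end Fitting

theorem exists_isNilpotent_sub_algebraMap_of_map {K L A B : Type*} [Field K] (p : ℕ)
    [Fact p.Prime] [CharP K p] [PerfectRing K p] [Field L] [Ring A] [Algebra K A] [Ring B]
    [Algebra L B] {f : K →+* L} {Φ : A →+* B} (hΦ : Function.Injective Φ)
    (hscalar : ∀ k, Φ (algebraMap K A k) = algebraMap L B (f k))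
    (hdescent : ∀ a c, Φ a = algebraMap L B c → c ∈ Set.range f)
    {a : A} {c : L} (hc : IsNilpotent (Φ a - algebraMap L B c)) :
    ∃ k : K, IsNilpotent (a - algebraMap K A k) := by
  have : CharP L p := charP_of_injective_ringHom f.injective p
  obtain ⟨n, hn⟩ := hc
  have frob : Φ (a ^ p ^ n) = algebraMap L B (c ^ p ^ n) := by
    have hpow : (Φ a - algebraMap L B c) ^ p ^ n = 0 :=
      pow_eq_zero_of_le (Nat.lt_pow_self (Fact.out : p.Prime).one_lt).le hn
    have := congrArg (aeval (Φ a)) (sub_pow_char_pow (p := p) (n := n) (X : L[X]) (C c))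
    simpa [hpow, sub_eq_zero] using this.symm
  obtain ⟨l, hl⟩ := hdescent _ _ frob
  obtain ⟨k, rfl⟩ := (bijective_iterateFrobenius K p n).surjective l
  have hk : f k = c := by
    refine iterateFrobenius_inj L p n ?_
    rwa [← RingHom.map_iterateFrobenius]
  exact ⟨k, n, hΦ (by rw [map_pow, map_sub, hscalar, hk, hn, map_zero])⟩

section ScalarAddNilpotent

variable {K A : Type*} [Field K] [Ring A] [Algebra K A]

theorem isUnit_sub_algebraMap_of_ne {a : A} {c d : K} (ha : IsNilpotent (a - algebraMap K A c))
    (hcd : c ≠ d) : IsUnit (a - algebraMap K A d) := by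
  have hunit : IsUnit (algebraMap K A (c - d)) := (sub_ne_zero.2 hcd).isUnit.map _
  convert ha.isUnit_add_left_of_commute hunit (Algebra.commutes _ _).symm using 1
  rw [map_sub]
  abel

variable [Nontrivial A]

theorem eq_of_isNilpotent_sub_algebraMap {a : A} {c d : K}
    (hc : IsNilpotent (a - algebraMap K A c)) (hd : IsNilpotent (a - algebraMap K A d)) :
    c = d := by
  by_contra hcd
  exact hd.not_isUnit (isUnit_sub_algebraMap_of_ne hc hcd)

variable (hA : ∀ a : A, ∃ c : K, IsNilpotent (a - algebraMap K A c))
include hA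

theorem isUnit_iff_not_isNilpotent (a : A) : IsUnit a ↔ ¬ IsNilpotent a := by
  refine ⟨fun hu hn => hn.not_isUnit hu, fun hn => ?_⟩
  obtain ⟨c, hc⟩ := hA a
  have hc0 : c ≠ 0 := by
    rintro rfl
    exact hn (by simpa using hc)
  simpa using isUnit_sub_algebraMap_of_ne hc hc0

theorem card_units_add_card_isNilpotent [Finite A] :
    Nat.card Aˣ + Nat.card {a : A // IsNilpotent a} = Nat.card A := by
  classical
  rw [Nat.card_congr ((Submonoid.unitsTypeEquivIsUnitSubmonoid (M := A)).toEquiv.trans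
    (Equiv.subtypeEquivRight (isUnit_iff_not_isNilpotent hA))), add_comm, ← Nat.card_sum]
  exact Nat.card_congr (Equiv.sumCompl _)

theorem card_mul_card_isNilpotent :
    Nat.card K * Nat.card {a : A // IsNilpotent a} = Nat.card A := by
  rw [← Nat.card_prod]
  refine Nat.card_congr (Equiv.ofBijective (fun p => algebraMap K A p.1 + p.2) ⟨?_, fun a => ?_⟩)
  · rintro ⟨c, a, ha⟩ ⟨d, b, hb⟩ (hab : algebraMap K A c + a = algebraMap K A d + b)
    obtain rfl : c = d := eq_of_isNilpotent_sub_algebraMap (a := algebraMap K A c + a)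
      (by rwa [add_sub_cancel_left]) (by rwa [hab, add_sub_cancel_left])
    simpa using hab
  · obtain ⟨c, hc⟩ := hA a
    exact ⟨(c, ⟨_, hc⟩), add_sub_cancel _ _⟩

theorem card_units_eq_one_sub_inv_mul [Finite A] :
    (Nat.card Aˣ : ℚ) = (1 - (Nat.card K : ℚ)⁻¹) * Nat.card A := by
  have : Finite K := Finite.of_injective _ (algebraMap K A).injective
  have hq : (Nat.card K : ℚ) ≠ 0 := Nat.cast_ne_zero.2 Nat.card_pos.ne'
  have hmul : (Nat.card K : ℚ) * Nat.card {a : A // IsNilpotent a} = Nat.card A :=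
    mod_cast card_mul_card_isNilpotent hA
  have hadd : (Nat.card Aˣ : ℚ) + Nat.card {a : A // IsNilpotent a} = Nat.card A :=
    mod_cast card_units_add_card_isNilpotent hA
  rw [sub_mul, one_mul]
  nth_rw 2 [← hmul]
  rw [inv_mul_cancel_left₀ hq, eq_sub_iff_add_eq, hadd]

end ScalarAddNilpotent

theorem units_inv_mul_eq_mul_inv_of_mul_eq_mul {m n R : Type*} [Fintype m] [DecidableEq m]
    [Fintype n] [DecidableEq n] [Semiring R] {u : (Matrix m m R)ˣ} {v : (Matrix n n R)ˣ}
    {X : Matrix m n R} (h : u.1 * X = X * v.1) : u⁻¹.1 * X = X * v⁻¹.1 :=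
  calc u⁻¹.1 * X = u⁻¹.1 * (X * v.1) * v⁻¹.1 := by
        rw [Matrix.mul_assoc, Matrix.mul_assoc X, v.mul_inv, Matrix.mul_one]
    _ = X * v⁻¹.1 := by rw [← h, ← Matrix.mul_assoc, u.inv_mul, Matrix.one_mul]

section EndAlgebra

variable {Q : Quiv} {r : Q.V → ℕ} {R S : Type} [CommRing R] [CommRing S]
  (F G : Type*) [CommSemiring F] [CommSemiring G] [Algebra F R] [Algebra G S]
  (x : ∀ a : Q.A, Matrix (Fin (r (Q.t a))) (Fin (r (Q.s a))) R)

/-- The endomorphisms `EndOf Q r R x` as an algebra over a base `F` of `R`, realised inside the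
product of the matrix algebras at the vertices. -/
def endAlgebra : Subalgebra F (∀ i : Q.V, Matrix (Fin (r i)) (Fin (r i)) R) where
  carrier := {φ | ∀ a : Q.A, φ (Q.t a) * x a = x a * φ (Q.s a)}
  mul_mem' {φ ψ} hφ hψ a := by
    simp only [Pi.mul_apply]
    rw [Matrix.mul_assoc, hψ a, ← Matrix.mul_assoc, hφ a, Matrix.mul_assoc]
  add_mem' {φ ψ} hφ hψ a := by
    simp only [Pi.add_apply]
    rw [Matrix.add_mul, Matrix.mul_add, hφ a, hψ a]
  algebraMap_mem' c a := by
    simp [Algebra.algebraMap_eq_smul_one]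

theorem card_endOf_eq_card_endAlgebra : Nat.card (EndOf Q r R x) = Nat.card (endAlgebra F x) :=
  rfl

/-- Automorphisms of a representation are the units of its endomorphism algebra: the inverse of an
invertible endomorphism commutes with the structure maps as well. -/
def autOfEquivUnits : AutOf Q r R x ≃ (endAlgebra F x)ˣ where
  toFun g :=
    { val := ⟨fun i => (g.1 i).1, g.2⟩
      inv := ⟨fun i => (g.1 i)⁻¹.1, fun a =>
        units_inv_mul_eq_mul_inv_of_mul_eq_mul (g.2 a)⟩
      val_inv := Subtype.ext (funext fun i => (g.1 i).mul_inv)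
      inv_val := Subtype.ext (funext fun i => (g.1 i).inv_mul) }
  invFun u :=
    ⟨fun i => ⟨u.1.1 i, u⁻¹.1.1 i, congrFun (congrArg Subtype.val u.mul_inv) i,
      congrFun (congrArg Subtype.val u.inv_mul) i⟩, u.1.2⟩
  left_inv _ := Subtype.ext (funext fun _ => Units.ext rfl)
  right_inv _ := Units.ext rfl

variable {x}

theorem endAlgebra_nontrivial [Nontrivial R] (hr : ∃ i, r i ≠ 0) :
    Nontrivial (endAlgebra F x) := by
  classical
  obtain ⟨i, hi⟩ := hr
  have : NeZero (r i) := ⟨hi⟩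
  have : Nontrivial (∀ i, Matrix (Fin (r i)) (Fin (r i)) R) := Pi.nontrivial_at i
  infer_instance

theorem IsIndecomposable.eq_zero_or_one (hx : IsIndecomposable Q r R x) (e : endAlgebra F x)
    (he : IsIdempotentElem e) : e = 0 ∨ e = 1 :=
  (hx.2 e.1 e.2 fun i => congrFun (congrArg Subtype.val he) i).imp
    (fun h => Subtype.ext (funext h)) (fun h => Subtype.ext (funext h))

variable (x) in
/-- Base change of endomorphisms along a ring homomorphism `f`, applied entrywise. The scalars `F`
and `G` of the two endomorphism algebras need not be related. -/
def endAlgebraMap (f : R →+* S) :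
    endAlgebra F x →+* endAlgebra G (fun a => (x a).map f) :=
  ((RingHom.pi fun i => f.mapMatrix.comp (Pi.evalRingHom _ i)).comp
    (endAlgebra F x).val.toRingHom).codRestrict _ fun φ a => by
      change (φ.1 (Q.t a)).map f * (x a).map f = (x a).map f * (φ.1 (Q.s a)).map f
      rw [← Matrix.map_mul, ← Matrix.map_mul, φ.2 a]

variable {F G}

theorem endAlgebraMap_injective {f : R →+* S} (hf : Function.Injective f) :
    Function.Injective (endAlgebraMap F G x f) := fun _ _ h =>
  Subtype.ext (funext fun i => Matrix.map_injective hf (congrFun (congrArg Subtype.val h) i))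

theorem endAlgebraMap_algebraMap {f : R →+* S} {g : F → G}
    (hfg : ∀ c, f (algebraMap F R c) = algebraMap G S (g c)) (c : F) :
    endAlgebraMap F G x f (algebraMap F _ c) = algebraMap G _ (g c) := by
  refine Subtype.ext (funext fun i => ?_)
  change (algebraMap F (Matrix (Fin (r i)) (Fin (r i)) R) c).map f = algebraMap G _ (g c)
  rw [Matrix.algebraMap_eq_diagonal, Matrix.algebraMap_eq_diagonal,
    Matrix.diagonal_map (map_zero f)]
  exact congrArg Matrix.diagonal (funext fun _ => hfg c)

theorem exists_eq_algebraMap_of_endAlgebraMap_eq (hr : ∃ i, r i ≠ 0) {f : R →+* S}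
    {φ : endAlgebra F x} {c : G} (h : endAlgebraMap F G x f φ = algebraMap G _ c) :
    ∃ y : R, f y = algebraMap G S c := by
  obtain ⟨i, hi⟩ := hr
  have : NeZero (r i) := ⟨hi⟩
  exact ⟨φ.1 i 0 0, (congrFun (congrFun (congrFun (congrArg Subtype.val h) i) 0) 0).trans <| by
    simp [Matrix.algebraMap_matrix_apply]⟩

end EndAlgebra

section TruncatedPolynomials

instance Oalpha_finite (K : Type) [Field K] (α : ℕ) : Module.Finite K (Oalpha K α) :=
  (monic_X_pow α).finite_quotient

theorem finrank_Oalpha (K : Type) [Field K] (α : ℕ) : Module.finrank K (Oalpha K α) = α := by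
  rw [finrank_quotient_span_eq_natDegree, natDegree_X_pow]

theorem Oalpha_nontrivial (K : Type) [Field K] {α : ℕ} (hα : 1 ≤ α) : Nontrivial (Oalpha K α) :=
  Module.nontrivial_of_finrank_pos (R := K) (by rwa [finrank_Oalpha])

variable {K L : Type} [Field K] [Field L] (f : K →+* L) {α : ℕ}

theorem truncBaseChange_mk (p : K[X]) :
    truncBaseChange K L f α (Ideal.Quotient.mk _ p) = Ideal.Quotient.mk _ (p.map f) :=
  rfl

theorem truncBaseChange_algebraMap (c : K) :
    truncBaseChange K L f α (algebraMap K _ c) = algebraMap L _ (f c) :=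
  congrArg (Ideal.Quotient.mk _) (map_C f)

theorem truncBaseChange_injective : Function.Injective (truncBaseChange K L f α) := by
  rw [injective_iff_map_eq_zero]
  intro y hy
  obtain ⟨p, rfl⟩ := Ideal.Quotient.mk_surjective y
  rw [truncBaseChange_mk] at hy
  simpa [Ideal.Quotient.eq_zero_iff_mem, Ideal.mem_span_singleton, X_pow_dvd_iff] using hy

theorem mem_range_of_truncBaseChange_eq_algebraMap (hα : 1 ≤ α) {y : Oalpha K α} {c : L}
    (h : truncBaseChange K L f α y = algebraMap L _ c) : c ∈ Set.range f := by
  obtain ⟨p, rfl⟩ := Ideal.Quotient.mk_surjective y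
  have hdvd : X ^ α ∣ p.map f - C c :=
    Ideal.mem_span_singleton.1 (Ideal.Quotient.eq.1 h)
  exact ⟨p.coeff 0, by simpa [sub_eq_zero] using X_pow_dvd_iff.1 hdvd 0 hα⟩

end TruncatedPolynomials

section BaseChange

variable {K L : Type} [Field K] [Field L] [IsAlgClosed L] {f : K →+* L} {Q : Quiv} [Finite Q.V]
  {r : Q.V → ℕ}

theorem exists_isNilpotent_sub_algebraMap_of_isIndecomposable_map {R S : Type} [CommRing R]
    [Algebra K R] [CommRing S] [Algebra L S] [Module.Finite L S] [Nontrivial S]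
    {x : ∀ a : Q.A, Matrix (Fin (r (Q.t a))) (Fin (r (Q.s a))) R} (p : ℕ) [Fact p.Prime]
    [CharP K p] [PerfectRing K p] {g : R →+* S} (hg : Function.Injective g)
    (hscalar : ∀ k, g (algebraMap K R k) = algebraMap L S (f k))
    (hdescent : ∀ y c, g y = algebraMap L S c → c ∈ Set.range f)
    (hx : IsIndecomposable Q r S fun a => (x a).map g) (φ : endAlgebra K x) :
    ∃ c : K, IsNilpotent (φ - algebraMap K (endAlgebra K x) c) := by
  have := endAlgebra_nontrivial L (x := fun a => (x a).map g) hx.1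
  obtain ⟨c, hc⟩ := exists_isNilpotent_sub_algebraMap_of_isAlgClosed (F := L)
    (hx.eq_zero_or_one L) (endAlgebraMap K L x g φ)
  refine exists_isNilpotent_sub_algebraMap_of_map (A := endAlgebra K x) p
    (endAlgebraMap_injective hg) (endAlgebraMap_algebraMap hscalar) (fun ψ d hψ => ?_) hc
  obtain ⟨y, hy⟩ := exists_eq_algebraMap_of_endAlgebraMap_eq hx.1 hψ
  exact hdescent y d hy

theorem card_autOf_of_isIndecomposable_map [Finite K] {α : ℕ} (hα : 1 ≤ α)
    {x : ∀ a : Q.A, Matrix (Fin (r (Q.t a))) (Fin (r (Q.s a))) (Oalpha K α)}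
    (hx : IsIndecomposable Q r (Oalpha L α) fun a => (x a).map (truncBaseChange K L f α)) :
    (Nat.card (AutOf Q r (Oalpha K α) x) : ℚ) =
      (1 - (Nat.card K : ℚ)⁻¹) * Nat.card (EndOf Q r (Oalpha K α) x) := by
  obtain ⟨p, _⟩ := CharP.exists K
  have : Fact p.Prime := ⟨CharP.char_is_prime K p⟩
  have := Oalpha_nontrivial K hα
  have := Oalpha_nontrivial L hα
  have := endAlgebra_nontrivial K (x := x) hx.1
  have : Finite (endAlgebra K x) := Module.finite_of_finite K
  rw [Nat.card_congr (autOfEquivUnits K x), card_endOf_eq_card_endAlgebra K x]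
  exact card_units_eq_one_sub_inv_mul (A := endAlgebra K x)
    (exists_isNilpotent_sub_algebraMap_of_isIndecomposable_map p
      (truncBaseChange_injective f) (truncBaseChange_algebraMap f)
      (fun _ _ => mem_range_of_truncBaseChange_eq_algebraMap f hα) hx)

end BaseChange

section StandardComplex

theorem card_ker_eq_zpow_mul_card_coker {K V W : Type*} [Field K] [Finite K] [AddCommGroup V]
    [Module K V] [Module.Finite K V] [AddCommGroup W] [Module K W] [Module.Finite K W]
    (d : V →ₗ[K] W) :
    (Nat.card (LinearMap.ker d) : ℚ) =
      (Nat.card K : ℚ) ^ ((Module.finrank K V : ℤ) - Module.finrank K W) *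
        Nat.card (W ⧸ LinearMap.range d) := by
  have hq : (Nat.card K : ℚ) ≠ 0 := Nat.cast_ne_zero.2 Nat.card_pos.ne'
  have hV := LinearMap.finrank_range_add_finrank_ker d
  have hW := Submodule.finrank_quotient_add_finrank (LinearMap.range d)
  rw [Module.natCard_eq_pow_finrank (K := K) (V := LinearMap.ker d),
    Module.natCard_eq_pow_finrank (K := K) (V := W ⧸ _), Nat.cast_pow, Nat.cast_pow,
    ← zpow_natCast, ← zpow_natCast, ← zpow_add₀ hq]
  congr 1
  omega

theorem finrank_vertexMatrices_sub_finrank_arrowMatrices (K R : Type*) [CommRing K]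
    [StrongRankCondition K] [AddCommGroup R] [Module K R] [Module.Free K R] [Module.Finite K R]
    (Q : Quiv) [Fintype Q.V] [Fintype Q.A] (r : Q.V → ℕ) :
    (Module.finrank K (∀ i : Q.V, Matrix (Fin (r i)) (Fin (r i)) R) : ℤ) -
        Module.finrank K (∀ a : Q.A, Matrix (Fin (r (Q.t a))) (Fin (r (Q.s a))) R) =
      Module.finrank K R *
        ((∑ i : Q.V, (r i : ℤ) ^ 2) - ∑ a : Q.A, (r (Q.s a) : ℤ) * (r (Q.t a) : ℤ)) := by
  simp only [Module.finrank_pi_fintype, Module.finrank_matrix, Fintype.card_fin, mul_sub,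
    Finset.mul_sum, Nat.cast_sum, Nat.cast_mul]
  congr 1 <;> exact Finset.sum_congr rfl fun _ _ => by ring

theorem card_endOf_eq_card_ker_dMap {K : Type} [Field K] {α : ℕ} {Q : Quiv} {r : Q.V → ℕ}
    (x : ∀ a : Q.A, Matrix (Fin (r (Q.t a))) (Fin (r (Q.s a))) (Oalpha K α)) :
    Nat.card (EndOf Q r (Oalpha K α) x) = Nat.card (LinearMap.ker (dMap K α Q r x)) :=
  Nat.card_congr (Equiv.subtypeEquivRight fun _ => by
    rw [LinearMap.mem_ker, funext_iff]
    exact forall_congr' fun _ => sub_eq_zero.symm)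

end StandardComplex

/-- For an absolutely indecomposable, locally free representation `M`
(given by `x`) of `Q` over `O_α = F_q[t]/(t^α)` of rank vector `r`:
`#Aut(M) = (1 − q^{-1}) · #End(M) = q^{α⟨r,r⟩} (1 − q^{-1}) · #Ext¹(M, M)`,
with `Ext¹(M, M)` the cokernel of the standard map `dMap`. -/
theorem card_aut_of_absolutely_indecomposable (K : Type) [Field K] [Fintype K]
    (α : ℕ) (hα : 1 ≤ α) (Q : Quiv) [Fintype Q.V] [Fintype Q.A] (r : Q.V → ℕ)
    (x : ∀ a : Q.A, Matrix (Fin (r (Q.t a))) (Fin (r (Q.s a))) (Oalpha K α))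
    (hx : IsAbsolutelyIndecomposable K α Q r x) :
    (Nat.card (AutOf Q r (Oalpha K α) x) : ℚ) =
        (1 - (Nat.card K : ℚ)⁻¹) * (Nat.card (EndOf Q r (Oalpha K α) x) : ℚ) ∧
      (Nat.card (AutOf Q r (Oalpha K α) x) : ℚ) =
        (Nat.card K : ℚ) ^ ((α : ℤ) * ((∑ i : Q.V, (r i : ℤ) ^ 2) -
            ∑ a : Q.A, (r (Q.s a) : ℤ) * (r (Q.t a) : ℤ))) *
          (1 - (Nat.card K : ℚ)⁻¹) *
          (Nat.card
            ((∀ a : Q.A, Matrix (Fin (r (Q.t a))) (Fin (r (Q.s a))) (Oalpha K α)) ⧸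
              LinearMap.range (dMap K α Q r x)) : ℚ) := by
  have card_aut := card_autOf_of_isIndecomposable_map hα hx
  refine ⟨card_aut, ?_⟩
  rw [card_aut, card_endOf_eq_card_ker_dMap, card_ker_eq_zpow_mul_card_coker,
    finrank_vertexMatrices_sub_finrank_arrowMatrices, finrank_Oalpha]
  ring
end

section
/- Let Q be a connected graph, and for a spanning tree T of Q with edge labeling v : T → {0, …, α−1}, and for each non-tree edge a let T_a be the edge set of the unique path in T joining the endpoints of a, v_{T_a} := max over T_a of v, and e_{T_a} the ≤-smallest edge of T_a achieving this max (with respect to a fixed total order on Q_1). Define n_T := Σ_{a ∉ T} (α − v_{T_a} − [a > e_{T_a}]). Then Σ_T q^{n_T}, summed over all pairs (T, v) of spanning trees with labelings v : T → {0,…,α−1}, equals A_{Q,1,α}(q) := Σ over chains E_1 ⊆ … ⊆ E_α ⊆ Q_1 with Q|_{E_α} connected of (q−1)^{b(Q|_{E_α})} q^{Σ_{k<α} b(Q|_{E_k})}. -/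
/-- A multigraph: finite sets of vertices and edges, loops and parallel edges allowed.
Each edge has two (not necessarily distinct) endpoints `s e`, `t e`. -/
structure Multigraph where
  V : Type
  E : Type
  s : E → V
  t : E → V

namespace Multigraph

variable (G : Multigraph)

/-- Two vertices are adjacent if some edge joins them (in either direction). -/
def Adj (x y : G.V) : Prop :=
  ∃ e : G.E, (G.s e = x ∧ G.t e = y) ∨ (G.s e = y ∧ G.t e = x)

/-- A graph is connected if it has a vertex and any two vertices are joined by a walk,
i.e. related under the equivalence relation generated by adjacency. -/
def Connected : Prop :=
  Nonempty G.V ∧ ∀ x y : G.V, Relation.EqvGen G.Adj x y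

/-- The number `C` of connected components: the cardinality of the set of equivalence
classes of vertices under the equivalence relation generated by adjacency. -/
noncomputable def numComponents : ℕ :=
  Nat.card (Quotient (Relation.EqvGen.setoid G.Adj))

/-- The (first) Betti number `b(G) = C - V + E`. -/
noncomputable def betti : ℤ :=
  (G.numComponents : ℤ) - (Nat.card G.V : ℤ) + (Nat.card G.E : ℤ)


/-- The Betti number as a natural number, `b(G) = (C + E) - V` (equal to
`C - V + E`, which is non-negative for any graph). -/
noncomputable def bettiNat : ℕ :=
  (G.numComponents + Nat.card G.E) - Nat.card G.V

/-- The spanning subgraph of `G` with all vertices and edge set `E' ⊆ G.E`. -/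
def restrictE (E' : Finset G.E) : Multigraph where
  V := G.V
  E := {e : G.E // e ∈ E'}
  s := fun e => G.s e.1
  t := fun e => G.t e.1

variable [Fintype G.V] [Fintype G.E] [LinearOrder G.E]

/-- A spanning tree of `G`: an edge subset of cardinality `#V − 1` whose spanning
subgraph is connected. -/
def IsSpanningTree (T : Finset G.E) : Prop :=
  T.card + 1 = Nat.card G.V ∧ (G.restrictE T).Connected

/-- For a spanning tree `T` and an edge `a ∉ T`, the edge set `T_a` of the unique
path in `T` joining the endpoints of `a`: a tree edge `e` lies on this path exactly
when exchanging `e` for `a` again yields a connected spanning subgraph. -/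
def fundPath (T : Finset G.E) (a : G.E) : Set G.E :=
  {e : G.E | e ∈ T ∧ (G.restrictE ((T.erase e) ∪ {a})).Connected}

/-- `v_{T_a}`: the largest label occurring on the path `T_a`, for a labeling
`v : T → {0, …, α−1}` (it is `0` when `T_a` is empty, e.g. when `a` is a loop). -/
noncomputable def vmaxPath {α : ℕ} (T : Finset G.E) (v : {e : G.E // e ∈ T} → Fin α)
    (a : G.E) : ℕ :=
  sSup {n : ℕ | ∃ e : {e : G.E // e ∈ T}, e.1 ∈ G.fundPath T a ∧ (v e).1 = n}

open Classical in
/-- The indicator `[a > e_{T_a}]`, where `e_{T_a}` is the smallest edge of `T_a`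
(in the fixed total order on edges) whose label achieves the maximum `v_{T_a}`
(the indicator is `0` when `T_a` is empty). -/
noncomputable def deltaInd {α : ℕ} (T : Finset G.E) (v : {e : G.E // e ∈ T} → Fin α)
    (a : G.E) : ℕ :=
  if ∃ e : {e : G.E // e ∈ T}, e.1 ∈ G.fundPath T a ∧ (v e).1 = G.vmaxPath T v a ∧
      e.1 < a ∧ ∀ e' : {e : G.E // e ∈ T},
        e'.1 ∈ G.fundPath T a → (v e').1 = G.vmaxPath T v a → e.1 ≤ e'.1
  then 1 else 0

/-- The exponent `n_T = Σ_{a ∉ T} (α − v_{T_a} − [a > e_{T_a}])` attached to a valued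
spanning tree `(T, v)`. -/
noncomputable def nT {α : ℕ} (T : Finset G.E) (v : {e : G.E // e ∈ T} → Fin α) : ℕ :=
  ∑ a ∈ Tᶜ, (α - G.vmaxPath T v a - G.deltaInd T v a)

end Multigraph

open Polynomial

/-!
A chain `E₁ ⊆ … ⊆ E_α` is the sequence of level sets of the labeling `f : Q₁ → {0, …, α}` counting
the terms that miss an edge. Run Kruskal's algorithm on the edges in increasing order of `f`, ties
being broken in favour of the larger edge. Its tree `T` spans every level set, so each Betti number
`b(Q|_{E_k})` counts the edges outside `T` with label less than `k`, and the summand of the chain is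
a product of one factor for each edge outside `T`. Connectedness of `Q|_{E_α}` says that the labels
on `T` are less than `α`.

By the fundamental-circuit criterion, a labeling that restricts to `v` on `T` has `T` as its Kruskal
tree exactly when `f a ≥ v_{T_a} + [a > e_{T_a}]` for all `a ∉ T`. These conditions are independent,
so summing over the labelings belonging to `(T, v)` factors over the edges `a ∉ T`, and each factor
is a telescoping sum equal to `q ^ (α - v_{T_a} - [a > e_{T_a}])`.
-/

open scoped Finset

section GreedyBase

variable {ε β : Type*}

/-- A base `B` of a matroid is greedy for the weight `w` if every element outside `B` is spanned by
the elements of `B` of strictly smaller weight: `B` is what Kruskal's algorithm produces. -/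
structure IsGreedyBase [Preorder β] (M : Matroid ε) (w : ε → β) (B : Set ε) : Prop where
  isBase : M.IsBase B
  mem_closure : ∀ a ∈ M.E \ B, a ∈ M.closure (B ∩ w ⁻¹' Set.Iio (w a))

/-- The elements that are not spanned by the elements of strictly smaller weight. -/
def greedyBase [Preorder β] (M : Matroid ε) (w : ε → β) : Set ε :=
  {e ∈ M.E | e ∉ M.closure (w ⁻¹' Set.Iio (w e))}

variable {M : Matroid ε} {w : ε → β} {B : Set ε}

namespace IsGreedyBase

section Preorder

variable [Preorder β]

theorem closure_inter_preimage (h : IsGreedyBase M w B) {L : Set β} (hL : IsLowerSet L) :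
    M.closure (B ∩ w ⁻¹' L) = M.closure (w ⁻¹' L) := by
  refine (M.closure_subset_closure Set.inter_subset_right).antisymm ?_
  rw [← M.closure_inter_ground]
  refine M.closure_subset_closure_of_subset_closure fun a ⟨haL, haE⟩ ↦ ?_
  by_cases haB : a ∈ B
  · exact M.mem_closure_of_mem' ⟨haB, haL⟩
  · exact M.closure_subset_closure
      (Set.inter_subset_inter_right _ (Set.preimage_mono fun _ hb ↦ hL (le_of_lt hb) haL))
      (h.mem_closure a ⟨haE, haB⟩)

theorem subset_preimage_of_spanning (h : IsGreedyBase M w B) {L : Set β} (hL : IsLowerSet L)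
    (hs : M.Spanning (w ⁻¹' L)) : B ⊆ w ⁻¹' L := by
  have hs' : M.Spanning (B ∩ w ⁻¹' L) := by
    rw [Matroid.spanning_iff_closure_eq (Set.inter_subset_left.trans h.isBase.subset_ground),
      h.closure_inter_preimage hL, hs.closure_eq]
  exact Set.inter_eq_left.1 (h.isBase.indep.eq_of_spanning_subset hs' Set.inter_subset_left)

theorem eq_greedyBase (h : IsGreedyBase M w B) : B = greedyBase M w := by
  ext e
  refine ⟨fun he ↦ ⟨h.isBase.subset_ground he, fun hcl ↦ ?_⟩, fun ⟨heE, hcl⟩ ↦ ?_⟩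
  · rw [← h.closure_inter_preimage (isLowerSet_Iio _)] at hcl
    refine h.isBase.indep.notMem_closure_sdiff_of_mem he (M.closure_subset_closure ?_ hcl)
    exact fun b ⟨hbB, hb⟩ ↦ ⟨hbB, fun hbe ↦ (ne_of_lt hb) (congrArg w hbe)⟩
  · by_contra heB
    exact hcl (M.closure_subset_closure Set.inter_subset_right (h.mem_closure e ⟨heE, heB⟩))

end Preorder

end IsGreedyBase

section LinearOrder

variable [LinearOrder β]

theorem indep_greedyBase [M.Finitary] (hw : w.Injective) : M.Indep (greedyBase M w) := by
  rw [Matroid.indep_iff_forall_subset_not_isCircuit fun e he ↦ he.1]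
  intro C hCsub hC
  obtain ⟨e, heC, hmax⟩ := Set.exists_max_image C w hC.finite hC.nonempty
  refine (hCsub heC).2 (M.closure_subset_closure ?_ (hC.mem_closure_sdiff_singleton_of_mem heC))
  exact fun b hb ↦ (hmax b hb.1).lt_of_ne (hw.ne hb.2)

variable [WellFoundedLT β]

theorem mem_closure_greedyBase (M : Matroid ε) (w : ε → β) {a : ε} (haE : a ∈ M.E)
    (ha : a ∉ greedyBase M w) : a ∈ M.closure (greedyBase M w ∩ w ⁻¹' Set.Iio (w a)) := by
  induction h : w a using WellFoundedLT.induction generalizing a with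
  | ind x ih =>
    subst h
    have hcl : a ∈ M.closure (w ⁻¹' Set.Iio (w a)) := by_contra fun hcl ↦ ha ⟨haE, hcl⟩
    rw [← M.closure_inter_ground] at hcl
    refine M.closure_subset_closure_of_subset_closure ?_ hcl
    rintro b ⟨hb, hbE⟩
    by_cases hbG : b ∈ greedyBase M w
    · exact M.mem_closure_of_mem' ⟨hbG, hb⟩
    · exact M.closure_subset_closure (Set.inter_subset_inter_right _
        (Set.preimage_mono (Set.Iio_subset_Iio (le_of_lt hb)))) (ih (w b) hb hbE hbG rfl)

theorem isGreedyBase_greedyBase [M.Finitary] (hw : w.Injective) :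
    IsGreedyBase M w (greedyBase M w) where
  isBase := by
    refine (indep_greedyBase hw).isBase_of_spanning ?_
    refine (Matroid.spanning_iff_ground_subset_closure fun e he ↦ he.1).2 fun a haE ↦ ?_
    by_cases ha : a ∈ greedyBase M w
    · exact M.mem_closure_of_mem' ha
    · exact M.closure_subset_closure Set.inter_subset_left (mem_closure_greedyBase M w haE ha)
  mem_closure a ha := mem_closure_greedyBase M w ha.1 ha.2

end LinearOrder

theorem isGreedyBase_iff_forall_fundCircuit [Preorder β] (hB : M.IsBase B) :
    IsGreedyBase M w B ↔ ∀ a ∈ M.E \ B, ∀ e ∈ M.fundCircuit a B, e ≠ a → w e < w a := by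
  refine ⟨fun h a ha e he hea ↦ ?_, fun h ↦ ⟨hB, fun a ha ↦ ?_⟩⟩
  · obtain ⟨C, hCsub, hC, haC⟩ := (Matroid.mem_closure_iff_exists_isCircuit
      fun haB ↦ ha.2 haB.1).1 (h.mem_closure a ha)
    rw [← hC.eq_fundCircuit_of_subset hB.indep
      (hCsub.trans (Set.insert_subset_insert Set.inter_subset_left))] at he
    exact ((hCsub he).resolve_left hea).2
  · refine M.closure_subset_closure ?_
      ((hB.fundCircuit_isCircuit ha.1 ha.2).mem_closure_sdiff_singleton_of_mem
        (M.mem_fundCircuit a B))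
    rintro e ⟨he, hea⟩
    exact ⟨(M.fundCircuit_subset_insert a B he).resolve_left hea, h a ha e he hea⟩

end GreedyBase

theorem card_quotient_strictAnti {V : Type*} [Finite V] :
    StrictAnti fun r : Setoid V ↦ Nat.card (Quotient r) := by
  intro r r' h
  have hsurj : Function.Surjective (Setoid.map_of_le h.le) :=
    Quotient.ind fun x ↦ ⟨⟦x⟧, rfl⟩
  refine (Nat.card_le_card_of_surjective _ hsurj).lt_of_ne fun hcard ↦ h.not_ge fun x y hxy ↦ ?_
  have hinj := ((Nat.bijective_iff_surjective_and_card _).2 ⟨hsurj, hcard.symm⟩).1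
  exact Quotient.exact (@hinj ⟦x⟧ ⟦y⟧ (Quotient.sound hxy))

namespace Multigraph

variable {G : Multigraph}

section Components

/-- The relation of lying in the same connected component of the spanning subgraph with
edge set `S`. -/
def reachable (S : Finset G.E) : Setoid G.V :=
  Relation.EqvGen.setoid (G.restrictE S).Adj

theorem reachable_le_iff {S : Finset G.E} {r : Setoid G.V} :
    reachable S ≤ r ↔ ∀ e ∈ S, r (G.s e) (G.t e) := by
  refine ⟨fun h e he ↦ h (Relation.EqvGen.rel _ _ ⟨⟨e, he⟩, Or.inl ⟨rfl, rfl⟩⟩),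
    fun h ↦ Setoid.eqvGen_le ?_⟩
  rintro x y ⟨⟨e, he⟩, ⟨rfl, rfl⟩ | ⟨rfl, rfl⟩⟩
  exacts [h e he, r.symm (h e he)]

theorem reachable_of_mem {S : Finset G.E} {e : G.E} (he : e ∈ S) :
    reachable S (G.s e) (G.t e) :=
  reachable_le_iff.1 le_rfl e he

theorem reachable_mono : Monotone (reachable : Finset G.E → Setoid G.V) :=
  fun _ _ h ↦ reachable_le_iff.2 fun _ he ↦ reachable_of_mem (h he)

theorem reachable_univ [Fintype G.E] (hG : G.Connected) :
    reachable (Finset.univ : Finset G.E) = ⊤ := by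
  have hle : Relation.EqvGen.setoid G.Adj ≤ reachable (Finset.univ : Finset G.E) := by
    refine Setoid.eqvGen_le ?_
    rintro x y ⟨e, ⟨rfl, rfl⟩ | ⟨rfl, rfl⟩⟩
    · exact reachable_of_mem (Finset.mem_univ e)
    · exact Setoid.symm' _ (reachable_of_mem (Finset.mem_univ e))
  exact Setoid.eq_top_iff.2 fun x y ↦ hle (hG.2 x y)

theorem connected_restrictE_iff (hG : G.Connected) {S : Finset G.E} :
    (G.restrictE S).Connected ↔ reachable S = ⊤ :=
  (and_iff_right hG.1).trans (Setoid.eq_top_iff (s := reachable S)).symm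

theorem numComponents_restrictE (S : Finset G.E) :
    (G.restrictE S).numComponents = Nat.card (Quotient (reachable S)) :=
  rfl

theorem numComponents_restrictE_eq_one_iff {S : Finset G.E} :
    (G.restrictE S).numComponents = 1 ↔ (G.restrictE S).Connected := by
  rw [numComponents_restrictE, Nat.card_eq_one_iff_unique, Quotient.subsingleton_iff,
    nonempty_quotient_iff, and_comm]
  exact and_congr_right fun _ ↦ Setoid.eq_top_iff

theorem numComponents_restrictE_empty : (G.restrictE ∅).numComponents = Nat.card G.V := by
  have hbot : reachable (∅ : Finset G.E) = ⊥ := le_bot_iff.1 (reachable_le_iff.2 (by simp))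
  rw [numComponents_restrictE, hbot]
  exact (Nat.card_eq_of_bijective (Quotient.mk ⊥)
    ⟨fun _ _ h ↦ Quotient.exact h, Quotient.mk_surjective⟩).symm

variable [Finite G.V]

theorem numComponents_restrictE_le_insert [DecidableEq G.E] (S : Finset G.E) (e : G.E) :
    (G.restrictE S).numComponents ≤ (G.restrictE (insert e S)).numComponents + 1 := by
  classical
  let glue (x : G.V) : Quotient (reachable S) := if reachable S x (G.t e) then ⟦G.s e⟧ else ⟦x⟧
  have hglue : reachable (insert e S) ≤ Setoid.ker glue := by
    refine reachable_le_iff.2 (Finset.forall_mem_insert _ _ _ |>.2 ⟨?_, fun b hb ↦ ?_⟩)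
    · simp [Setoid.ker_def, glue, Setoid.refl]
    · have hst := reachable_of_mem hb
      have hiff : reachable S (G.s b) (G.t e) ↔ reachable S (G.t b) (G.t e) :=
        ⟨Setoid.trans' _ (Setoid.symm' _ hst), Setoid.trans' _ hst⟩
      simp only [Setoid.ker_def, glue, hiff, Quotient.sound hst]
  let split : Option (Quotient (reachable (insert e S))) → Quotient (reachable S)
    | none => ⟦G.t e⟧
    | some c => c.lift glue hglue
  have hsplit : split.Surjective := by
    refine Quotient.ind fun x ↦ ?_
    by_cases hx : reachable S x (G.t e)
    · exact ⟨none, Quotient.sound (Setoid.symm' _ hx)⟩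
    · exact ⟨some ⟦x⟧, if_neg hx⟩
  exact (Nat.card_le_card_of_surjective split hsplit).trans_eq Finite.card_option

end Components

section CycleMatroid

/-- A forest has the smallest number of edges allowed by its number of components; equivalently,
its first Betti number vanishes. -/
def IsForest (S : Finset G.E) : Prop :=
  (G.restrictE S).numComponents + S.card = Nat.card G.V

theorem isForest_empty : IsForest (∅ : Finset G.E) := by
  simp [IsForest, numComponents_restrictE_empty]

variable [Finite G.V]

theorem numComponents_add_card_mono :
    Monotone fun S : Finset G.E ↦ (G.restrictE S).numComponents + S.card := by
  classical
  refine Finset.monotone_iff_forall_le_insert.2 fun S e he ↦ ?_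
  have := numComponents_restrictE_le_insert S e
  simp only [Finset.card_insert_of_notMem he]
  omega

theorem card_le_numComponents_add_card (S : Finset G.E) :
    Nat.card G.V ≤ (G.restrictE S).numComponents + S.card := by
  simpa [numComponents_restrictE_empty] using numComponents_add_card_mono (Finset.empty_subset S)

theorem IsForest.subset {S S' : Finset G.E} (hS : IsForest S) (h : S' ⊆ S) : IsForest S' :=
  ((numComponents_add_card_mono h).trans_eq hS).antisymm (card_le_numComponents_add_card S')

theorem IsForest.insert_iff [DecidableEq G.E] {S : Finset G.E} (hS : IsForest S) {e : G.E}
    (he : e ∉ S) :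
    IsForest (insert e S) ↔ ¬ reachable S (G.s e) (G.t e) := by
  rw [IsForest, ← hS, Finset.card_insert_of_notMem he]
  refine ⟨fun h hr ↦ ?_, fun hr ↦ ?_⟩
  · have hreach : reachable (insert e S) = reachable S :=
      le_antisymm
        (reachable_le_iff.2 ((Finset.forall_mem_insert _ _ _).2 ⟨hr, fun _ ↦ reachable_of_mem⟩))
        (reachable_mono (Finset.subset_insert e S))
    simp only [numComponents_restrictE, hreach] at h
    omega
  · have hlt : reachable S < reachable (insert e S) :=
      (reachable_mono (Finset.subset_insert e S)).lt_of_not_ge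
        fun h ↦ hr (h (reachable_of_mem (Finset.mem_insert_self e S)))
    have := card_quotient_strictAnti hlt
    have := numComponents_restrictE_le_insert S e
    simp only [numComponents_restrictE] at *
    omega

theorem IsForest.exists_insert [DecidableEq G.E] {S S' : Finset G.E} (hS : IsForest S)
    (hS' : IsForest S') (h : S.card < S'.card) : ∃ e ∈ S', e ∉ S ∧ IsForest (insert e S) := by
  have hlt : (G.restrictE S').numComponents < (G.restrictE S).numComponents := by
    unfold IsForest at hS hS'
    omega
  have hle : ¬ reachable S' ≤ reachable S := fun hle ↦
    hlt.not_ge (card_quotient_strictAnti (V := G.V) |>.antitone hle)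
  obtain ⟨e, he, hr⟩ : ∃ e ∈ S', ¬ reachable S (G.s e) (G.t e) := by
    simpa [reachable_le_iff] using hle
  have heS : e ∉ S := fun heS ↦ hr (reachable_of_mem heS)
  exact ⟨e, he, heS, (hS.insert_iff heS).2 hr⟩

open scoped Classical in
/-- The cycle matroid of a multigraph, whose independent sets are the forests. -/
noncomputable def cycleMatroid (G : Multigraph) [Finite G.V] : Matroid G.E :=
  (IndepMatroid.ofFinset Set.univ IsForest isForest_empty (fun _ _ ↦ IsForest.subset)
    (fun _ _ ↦ IsForest.exists_insert) fun _ _ ↦ Set.subset_univ _).matroid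

theorem cycleMatroid_ground : G.cycleMatroid.E = Set.univ :=
  rfl

theorem cycleMatroid_indep_iff {S : Finset G.E} : G.cycleMatroid.Indep S ↔ IsForest S := by
  simp only [cycleMatroid, IndepMatroid.matroid_Indep, IndepMatroid.ofFinset_indep]

instance [Finite G.E] : G.cycleMatroid.Finite := ⟨Set.toFinite _⟩

variable [Finite G.E]

theorem mem_closure_cycleMatroid {S : Finset G.E} {e : G.E} :
    e ∈ G.cycleMatroid.closure S ↔ reachable S (G.s e) (G.t e) := by
  classical
  have hforest {F : Finset G.E} (hF : IsForest F) {a : G.E} :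
      a ∈ G.cycleMatroid.closure F ↔ reachable F (G.s a) (G.t a) := by
    by_cases ha : a ∈ F
    · exact iff_of_true (Matroid.mem_closure_of_mem' _ ha) (reachable_of_mem ha)
    · rw [← not_iff_not, ← hF.insert_iff ha, ← cycleMatroid_indep_iff, Finset.coe_insert,
        (cycleMatroid_indep_iff.2 hF).insert_indep_iff]
      simp [cycleMatroid_ground, ha]
  obtain ⟨B, hB⟩ := G.cycleMatroid.exists_isBasis (S : Set G.E) (Set.subset_univ _)
  lift B to Finset G.E using Set.toFinite B
  have hF := cycleMatroid_indep_iff.1 hB.indep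
  have hreach : reachable B = reachable S := by
    refine (reachable_mono (Finset.coe_subset.1 hB.subset)).antisymm
      (reachable_le_iff.2 fun a ha ↦ (hforest hF).1 ?_)
    exact hB.subset_closure ha
  rw [← hB.closure_eq_closure, hforest hF, hreach]

theorem spanning_cycleMatroid_iff (hG : G.Connected) {S : Finset G.E} :
    G.cycleMatroid.Spanning S ↔ (G.restrictE S).Connected := by
  have := Fintype.ofFinite G.E
  rw [Matroid.spanning_iff_ground_subset_closure (Set.subset_univ _), connected_restrictE_iff hG,
    ← top_le_iff, ← reachable_univ hG, reachable_le_iff]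
  simp [cycleMatroid_ground, Set.subset_def, mem_closure_cycleMatroid]

theorem bettiNat_restrictE_of_subset_closure {F S : Finset G.E} (hF : IsForest F) (hFS : F ⊆ S)
    (hS : (S : Set G.E) ⊆ G.cycleMatroid.closure F) :
    (G.restrictE S).bettiNat = S.card - F.card := by
  have hreach : reachable F = reachable S :=
    (reachable_mono hFS).antisymm
      (reachable_le_iff.2 fun e he ↦ mem_closure_cycleMatroid.1 (hS he))
  have hcard : Nat.card (G.restrictE S).E = S.card := Nat.card_eq_card_toFinset _ |>.trans (by simp)
  have hV : (G.restrictE S).numComponents + F.card = Nat.card (G.restrictE S).V := by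
    rw [numComponents_restrictE, ← hreach]
    exact hF
  rw [bettiNat, hcard, ← hV, Nat.add_sub_add_left]

end CycleMatroid

section SpanningTree

theorem isForest_iff_connected {S : Finset G.E} (hS : S.card + 1 = Nat.card G.V) :
    IsForest S ↔ (G.restrictE S).Connected := by
  rw [← numComponents_restrictE_eq_one_iff, IsForest]
  omega

variable [Finite G.V] [Finite G.E]

theorem isSpanningTree_iff_isBase (hG : G.Connected) {T : Finset G.E} :
    G.IsSpanningTree T ↔ G.cycleMatroid.IsBase T := by
  suffices h : G.IsSpanningTree T ↔ G.cycleMatroid.Indep T ∧ G.cycleMatroid.Spanning T from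
    h.trans ⟨fun h ↦ h.1.isBase_of_spanning h.2, fun h ↦ ⟨h.indep, h.spanning⟩⟩
  rw [cycleMatroid_indep_iff, spanning_cycleMatroid_iff hG]
  refine and_congr_left fun hT ↦ ?_
  rw [IsForest, numComponents_restrictE_eq_one_iff.2 hT, add_comm]

theorem fundPath_eq_fundCircuit_sdiff [LinearOrder G.E] (hG : G.Connected) {T : Finset G.E}
    (hT : G.IsSpanningTree T) {a : G.E} (ha : a ∉ T) :
    G.fundPath T a = G.cycleMatroid.fundCircuit a T \ {a} := by
  have hB := (isSpanningTree_iff_isBase hG).1 hT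
  ext e
  by_cases heT : e ∈ T
  · have hea : e ≠ a := fun h ↦ ha (h ▸ heT)
    have hcard : (T.erase e ∪ {a}).card + 1 = Nat.card G.V := by
      rw [Finset.card_union_of_disjoint (by simp [ha]), Finset.card_singleton,
        Finset.card_erase_add_one heT, hT.1]
    have hset : insert a (T : Set G.E) \ {e} = (T.erase e ∪ {a} : Finset G.E) := by
      rw [← Set.insert_sdiff_singleton_comm hea.symm, Finset.coe_union, Finset.coe_erase,
        Finset.coe_singleton, Set.union_singleton]
    have hcl : a ∈ G.cycleMatroid.closure T := hB.closure_eq ▸ Set.mem_univ a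
    rw [Set.mem_sdiff, hB.indep.mem_fundCircuit_iff hcl ha, hset, cycleMatroid_indep_iff,
      isForest_iff_connected hcard]
    exact (and_iff_right heT).trans (and_iff_left hea).symm
  · refine iff_of_false (fun he ↦ heT he.1) fun he ↦ ?_
    exact heT ((G.cycleMatroid.fundCircuit_subset_insert a T he.1).resolve_left he.2)

end SpanningTree

end Multigraph

section LevelSets

variable {ε : Type*} [Fintype ε]

/-- The elements whose label is less than `k`. -/
def level (f : ε → ℕ) (k : ℕ) : Finset ε := {e | f e < k}

theorem mem_level {f : ε → ℕ} {k : ℕ} {e : ε} : e ∈ level f k ↔ f e < k :=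
  Finset.mem_filter_univ e

/-- The chain `E₁ ⊆ … ⊆ E_α` attached to a labeling `f` by `{0, …, α}`. The index is shifted: the
`k`-th term, `k < α`, is `E_{k+1}`, and `f e` counts the terms that do not contain `e`. -/
def levelChain (α : ℕ) (f : ε → ℕ) (k : Fin α) : Finset ε := level f (k + 1)

theorem monotone_levelChain (α : ℕ) (f : ε → ℕ) : Monotone (levelChain α f) :=
  fun _ _ hkl _ he ↦ mem_level.2 ((mem_level.1 he).trans_le (Nat.succ_le_succ hkl))

theorem card_notMem_levelChain [DecidableEq ε] {α : ℕ} {f : ε → ℕ} {e : ε} (he : f e ≤ α) :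
    #{k | e ∉ levelChain α f k} = f e := by
  have hiff (k : Fin α) : e ∉ levelChain α f k ↔ k < f e := by
    rw [levelChain, mem_level, not_lt, Nat.succ_le_iff]
  simp only [hiff, Fin.card_filter_val_lt, min_eq_right he]

theorem levelChain_card_notMem [DecidableEq ε] {α : ℕ} {c : Fin α → Finset ε} (hc : Monotone c) :
    levelChain α (fun e ↦ #{k | e ∉ c k}) = c := by
  ext k e
  rw [levelChain, mem_level, Nat.lt_succ_iff]
  refine ⟨fun hcard ↦ by_contra fun he ↦ ?_, fun he ↦ ?_⟩
  · have hsub : Finset.Iic k ⊆ ({j | e ∉ c j} : Finset (Fin α)) := fun j hj ↦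
      Finset.mem_filter_univ j |>.2 fun hej ↦ he (hc (Finset.mem_Iic.1 hj) hej)
    have := Finset.card_le_card hsub
    rw [Fin.card_Iic] at this
    omega
  · rw [← Fin.card_Iio k]
    refine Finset.card_le_card fun j hj ↦ Finset.mem_Iio.2 (lt_of_not_ge fun hkj ↦ ?_)
    exact (Finset.mem_filter_univ j).1 hj (hc hkj he)

theorem bijOn_levelChain (α : ℕ) :
    Set.BijOn (levelChain α) {f : ε → ℕ | ∀ e, f e ≤ α} {c | Monotone c} := by
  classical
  refine ⟨fun f _ ↦ monotone_levelChain α f, fun f hf g hg hfg ↦ funext fun e ↦ ?_, fun c hc ↦ ?_⟩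
  · rw [← card_notMem_levelChain (hf e), hfg, card_notMem_levelChain (hg e)]
  · exact ⟨_, fun e ↦ card_finset_fin_le _, levelChain_card_notMem hc⟩

end LevelSets

section LocalWeight

variable {R : Type*} [CommRing R]

/-- The factor that a non-tree edge with label `j` contributes to the summand of the chain attached
to a labeling by `{0, …, α}`. The exponent `α - 1 - j` is meant to be `0` also for `j = α`. -/
def localWeight (q : R) (α j : ℕ) : R :=
  (if j < α then q - 1 else 1) * q ^ (α - 1 - j)

theorem sum_Icc_localWeight (q : R) {α m : ℕ} (hm : m ≤ α) :
    ∑ j ∈ Finset.Icc m α, localWeight q α j = q ^ (α - m) := by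
  induction hm using Nat.decreasingInduction with
  | self => simp [localWeight]
  | of_succ m hm ih =>
    obtain ⟨d, rfl⟩ := Nat.exists_eq_add_of_lt hm
    rw [← Finset.add_sum_Ioc_eq_sum_Icc hm.le, ← Finset.Icc_succ_left_eq_Ioc,
      Order.succ_eq_add_one, ih, localWeight, if_pos hm]
    rw [show m + d + 1 - 1 - m = d by omega, show m + d + 1 - (m + 1) = d by omega,
      show m + d + 1 - m = d + 1 by omega]
    ring

theorem card_fin_filter_lt_succ (α j : ℕ) :
    #{k : Fin α | k.1 + 1 < α ∧ j < k.1 + 1} = α - 1 - j := by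
  rw [← Nat.card_Ico, ← Finset.card_map Fin.valEmbedding]
  congr 1
  ext k
  simp only [Finset.mem_map, Finset.mem_filter_univ, Fin.valEmbedding_apply, Finset.mem_Ico]
  exact ⟨by rintro ⟨k, hk, rfl⟩; omega, fun hk ↦ ⟨⟨k, by omega⟩, by simp; omega, rfl⟩⟩

theorem prod_localWeight {ε : Type*} (q : R) (α : ℕ) (S : Finset ε) (f : ε → ℕ) :
    ∏ a ∈ S, localWeight q α (f a) =
      (q - 1) ^ #{a ∈ S | f a < α} *
        q ^ ∑ k : Fin α with k.1 + 1 < α, #{a ∈ S | f a < k.1 + 1} := by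
  have hcount :
      ∑ k : Fin α with k.1 + 1 < α, #{a ∈ S | f a < k.1 + 1} = ∑ a ∈ S, (α - 1 - f a) := by
    simp only [← card_fin_filter_lt_succ, ← Finset.filter_filter]
    exact (Finset.sum_card_bipartiteAbove_eq_sum_card_bipartiteBelow
      fun a (k : Fin α) ↦ f a < k.1 + 1).symm
  simp only [localWeight]
  rw [Finset.prod_mul_distrib, ← Finset.prod_filter, Finset.prod_const, hcount,
    Finset.prod_pow_eq_pow_sum]

end LocalWeight

namespace Multigraph

variable {G : Multigraph}

section LabelKey

/-- The key by which Kruskal's algorithm processes the edges: by increasing label, ties being broken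
in favour of the larger edge. -/
def labelKey (f : G.E → ℕ) (e : G.E) : ℕ ×ₗ (G.E)ᵒᵈ :=
  toLex (f e, OrderDual.toDual e)

theorem labelKey_injective (f : G.E → ℕ) : (labelKey f).Injective :=
  fun _ _ h ↦ congrArg (fun p : ℕ ×ₗ (G.E)ᵒᵈ ↦ OrderDual.ofDual (ofLex p).2) h

theorem coe_level [Fintype G.E] (f : G.E → ℕ) (k : ℕ) :
    (level f k : Set G.E) = labelKey f ⁻¹' {p | (ofLex p).1 < k} := by
  ext e
  exact mem_level

variable [LinearOrder G.E]

theorem labelKey_lt_iff {f : G.E → ℕ} {e a : G.E} :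
    labelKey f e < labelKey f a ↔ f e < f a ∨ f e = f a ∧ a < e :=
  Prod.Lex.toLex_lt_toLex

theorem labelKey_le_iff {f : G.E → ℕ} {e a : G.E} :
    labelKey f e ≤ labelKey f a ↔ f e < f a ∨ f e = f a ∧ a ≤ e :=
  Prod.Lex.toLex_le_toLex

theorem isLowerSet_fst_lt (k : ℕ) : IsLowerSet {p : ℕ ×ₗ (G.E)ᵒᵈ | (ofLex p).1 < k} :=
  fun _ _ hle ↦ (Prod.Lex.monotone_fst _ _ hle).trans_lt

end LabelKey

section Threshold

variable [LinearOrder G.E] {α : ℕ} {T : Finset G.E}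

/-- The least label of the non-tree edge `a` for which `T` remains a greedy base:
`v_{T_a} + [a > e_{T_a}]`. -/
noncomputable def threshold (T : Finset G.E) (v : {e // e ∈ T} → Fin α) (a : G.E) : ℕ :=
  G.vmaxPath T v a + G.deltaInd T v a

variable {v : {e // e ∈ T} → Fin α} {f : G.E → ℕ} {a e₀ : G.E}

theorem vmaxPath_eq (hf : ∀ e, f e.1 = v e) (he₀ : e₀ ∈ G.fundPath T a)
    (hmax : ∀ e ∈ G.fundPath T a, labelKey f e ≤ labelKey f e₀) : G.vmaxPath T v a = f e₀ := by
  refine IsGreatest.csSup_eq ⟨⟨⟨e₀, he₀.1⟩, he₀, (hf _).symm⟩, ?_⟩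
  rintro _ ⟨e, he, rfl⟩
  rw [← hf e]
  exact (labelKey_le_iff.1 (hmax e he)).elim le_of_lt fun h ↦ h.1.le

theorem deltaInd_eq (hf : ∀ e, f e.1 = v e) (he₀ : e₀ ∈ G.fundPath T a)
    (hmax : ∀ e ∈ G.fundPath T a, labelKey f e ≤ labelKey f e₀) :
    G.deltaInd T v a = if e₀ < a then 1 else 0 := by
  have hle {e : G.E} (he : e ∈ G.fundPath T a) (hfe : f e = f e₀) : e₀ ≤ e :=
    (labelKey_le_iff.1 (hmax e he)).elim (fun hlt ↦ absurd hfe hlt.ne) And.right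
  classical
  rw [deltaInd, vmaxPath_eq hf he₀ hmax]
  refine if_congr ⟨fun ⟨e, he, hve, hea, _⟩ ↦ (hle he ((hf e).trans hve)).trans_lt hea,
    fun h ↦ ⟨⟨e₀, he₀.1⟩, he₀, (hf _).symm, h, fun e he hve ↦ ?_⟩⟩ rfl rfl
  exact hle he ((hf e).trans hve)

theorem threshold_eq_zero (h : G.fundPath T a = ∅) : threshold T v a = 0 := by
  simp [threshold, vmaxPath, deltaInd, h]

theorem threshold_le_iff (hf : ∀ e, f e.1 = v e) (ha : a ∉ T) :
    threshold T v a ≤ f a ↔ ∀ e ∈ G.fundPath T a, labelKey f e < labelKey f a := by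
  obtain hempty | hne := (G.fundPath T a).eq_empty_or_nonempty
  · simp [threshold_eq_zero hempty, hempty]
  obtain ⟨e₀, he₀, hmax⟩ := Set.exists_max_image _ (labelKey f)
    (T.finite_toSet.subset fun _ he ↦ he.1) hne
  have hne : e₀ ≠ a := fun h ↦ ha (h ▸ he₀.1)
  calc threshold T v a ≤ f a
      ↔ f e₀ + (if e₀ < a then 1 else 0) ≤ f a := by
        rw [threshold, vmaxPath_eq hf he₀ hmax, deltaInd_eq hf he₀ hmax]
    _ ↔ labelKey f e₀ < labelKey f a := by
        rw [labelKey_lt_iff]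
        obtain h | h := hne.lt_or_gt
        · simp [h, h.not_gt]
        · simp [h, h.not_gt, le_iff_lt_or_eq]
    _ ↔ ∀ e ∈ G.fundPath T a, labelKey f e < labelKey f a :=
        ⟨fun h e he ↦ (hmax e he).trans_lt h, fun h ↦ h e₀ he₀⟩

theorem threshold_le (v : {e // e ∈ T} → Fin α) (ha : a ∉ T) : threshold T v a ≤ α := by
  let f (e : G.E) : ℕ := if he : e ∈ T then v ⟨e, he⟩ else α
  have hf (e : {e // e ∈ T}) : f e = v e := dif_pos e.2
  have hfa : f a = α := dif_neg ha
  suffices h : threshold T v a ≤ f a from h.trans_eq hfa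
  refine (threshold_le_iff hf ha).2 fun e he ↦ ?_
  rw [labelKey_lt_iff, hf ⟨e, he.1⟩, hfa]
  exact Or.inl (v ⟨e, he.1⟩).2

end Threshold

variable {α : ℕ} {T : Finset G.E}

section Kruskal

variable [Finite G.V] [LinearOrder G.E]

theorem isGreedyBase_labelKey_iff [Finite G.E] (hG : G.Connected)
    (hT : G.IsSpanningTree T) {v : {e // e ∈ T} → Fin α} {f : G.E → ℕ} (hf : ∀ e, f e.1 = v e) :
    IsGreedyBase G.cycleMatroid (labelKey f) T ↔ ∀ a ∉ T, threshold T v a ≤ f a := by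
  rw [isGreedyBase_iff_forall_fundCircuit ((isSpanningTree_iff_isBase hG).1 hT)]
  simp only [cycleMatroid_ground, Set.mem_sdiff, Set.mem_univ, true_and, Finset.mem_coe]
  refine forall₂_congr fun a ha ↦ ?_
  rw [threshold_le_iff hf ha, fundPath_eq_fundCircuit_sdiff hG hT ha]
  simp only [Set.mem_sdiff, Set.mem_singleton_iff, and_imp]

theorem bettiNat_restrictE_level [Fintype G.E] {f : G.E → ℕ}
    (h : IsGreedyBase G.cycleMatroid (labelKey f) T) (k : ℕ) :
    (G.restrictE (level f k)).bettiNat = #{a ∈ Tᶜ | f a < k} := by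
  have hF : IsForest (level f k ∩ T) :=
    cycleMatroid_indep_iff.1 (h.isBase.indep.subset (Finset.coe_subset.2 Finset.inter_subset_right))
  have hcl : (level f k : Set G.E) ⊆ G.cycleMatroid.closure (level f k ∩ T : Finset G.E) := by
    rw [Finset.coe_inter, Set.inter_comm, coe_level,
      h.closure_inter_preimage (isLowerSet_fst_lt k)]
    exact G.cycleMatroid.subset_closure _ (Set.subset_univ _)
  rw [bettiNat_restrictE_of_subset_closure hF Finset.inter_subset_left hcl,
    ← Finset.card_sdiff_of_subset Finset.inter_subset_left, Finset.sdiff_inter_self_left]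
  congr 1
  ext a
  simp only [Finset.mem_sdiff, mem_level, Finset.mem_filter, Finset.mem_compl, and_comm]

end Kruskal

section Box

variable [Fintype G.E] [LinearOrder G.E]

/-- The labelings by `{0, …, α}` that extend `v` and for which the spanning tree `T` is greedy,
written as a product over the edges so that sums over it factor. -/
noncomputable def box (T : Finset G.E) (v : {e // e ∈ T} → Fin α) : Finset (G.E → ℕ) :=
  Fintype.piFinset fun e ↦
    if he : e ∈ T then {(v ⟨e, he⟩ : ℕ)} else Finset.Icc (threshold T v e) α

theorem mem_box_iff {v : {e // e ∈ T} → Fin α} {f : G.E → ℕ} :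
    f ∈ box T v ↔
      (∀ e, f e.1 = v e) ∧ (∀ a ∉ T, threshold T v a ≤ f a) ∧ ∀ e, f e ≤ α := by
  rw [box, Fintype.mem_piFinset]
  refine ⟨fun h ↦ ?_, fun ⟨hv, hthr, hα⟩ e ↦ ?_⟩
  · have hv (e : {e // e ∈ T}) : f e = v e := by simpa [e.2] using h e
    have hnot (a : G.E) (ha : a ∉ T) : threshold T v a ≤ f a ∧ f a ≤ α := by simpa [ha] using h a
    refine ⟨hv, fun a ha ↦ (hnot a ha).1, fun e ↦ ?_⟩
    by_cases he : e ∈ T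
    · exact (hv ⟨e, he⟩).trans_le (v ⟨e, he⟩).2.le
    · exact (hnot e he).2
  · split_ifs with he
    · exact Finset.mem_singleton.2 (hv ⟨e, he⟩)
    · exact Finset.mem_Icc.2 ⟨hthr e he, hα e⟩

theorem pairwise_disjoint_box (T : Finset G.E) :
    Pairwise (Function.onFun Disjoint fun v : {e // e ∈ T} → Fin α ↦
      (box T v : Set (G.E → ℕ))) := by
  intro v v' hne
  refine Set.disjoint_left.2 fun f hf hf' ↦ hne (funext fun e ↦ Fin.ext ?_)
  rw [← (mem_box_iff.1 hf).1 e, (mem_box_iff.1 hf').1 e]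

variable [Finite G.V]

theorem mem_box_iff_isGreedyBase (hG : G.Connected) (hT : G.IsSpanningTree T)
    {v : {e // e ∈ T} → Fin α} {f : G.E → ℕ} :
    f ∈ box T v ↔ (∀ e, f e.1 = v e) ∧ IsGreedyBase G.cycleMatroid (labelKey f) T ∧
      ∀ e, f e ≤ α := by
  rw [mem_box_iff]
  refine and_congr_right fun hv ↦ ?_
  rw [isGreedyBase_labelKey_iff hG hT hv]

theorem pairwise_disjoint_iUnion_box (hG : G.Connected) :
    Pairwise (Function.onFun Disjoint fun T : {T : Finset G.E // G.IsSpanningTree T} ↦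
      ⋃ v : {e // e ∈ T.1} → Fin α, (box T.1 v : Set (G.E → ℕ))) := by
  intro T T' hne
  refine Set.disjoint_left.2 fun f hf hf' ↦ hne (Subtype.ext (Finset.coe_injective ?_))
  obtain ⟨v, hv⟩ := Set.mem_iUnion.1 hf
  obtain ⟨v', hv'⟩ := Set.mem_iUnion.1 hf'
  rw [((mem_box_iff_isGreedyBase hG T.2).1 hv).2.1.eq_greedyBase,
    ((mem_box_iff_isGreedyBase hG T'.2).1 hv').2.1.eq_greedyBase]

theorem iUnion_box (hG : G.Connected) :
    ⋃ T : {T : Finset G.E // G.IsSpanningTree T}, ⋃ v : {e // e ∈ T.1} → Fin α,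
        (box T.1 v : Set (G.E → ℕ)) =
      {f | (∀ e, f e ≤ α) ∧ (G.restrictE (level f α)).Connected} := by
  ext f
  simp only [Set.mem_iUnion, Finset.mem_coe, Set.mem_ofPred_eq, ← spanning_cycleMatroid_iff hG]
  constructor
  · rintro ⟨⟨T, hT⟩, v, hf⟩
    obtain ⟨hv, hgreedy, hα⟩ := (mem_box_iff_isGreedyBase hG hT).1 hf
    refine ⟨hα, hgreedy.isBase.spanning.superset (fun e he ↦ ?_) (Set.subset_univ _)⟩
    exact mem_level.2 ((hv ⟨e, he⟩).trans_lt (v ⟨e, he⟩).2)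
  · rintro ⟨hα, hspan⟩
    obtain ⟨T, hT⟩ := (Set.toFinite (greedyBase G.cycleMatroid (labelKey f))).exists_finset_coe
    have hgreedy : IsGreedyBase G.cycleMatroid (labelKey f) T :=
      hT ▸ isGreedyBase_greedyBase (labelKey_injective f)
    have hlt (e : G.E) (he : e ∈ T) : f e < α := by
      rw [coe_level] at hspan
      exact hgreedy.subset_preimage_of_spanning (isLowerSet_fst_lt α) hspan he
    have htree := (isSpanningTree_iff_isBase hG).2 hgreedy.isBase
    exact ⟨⟨T, htree⟩, fun e ↦ ⟨f e, hlt e e.2⟩,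
      (mem_box_iff_isGreedyBase hG htree).2 ⟨fun _ ↦ rfl, hgreedy, hα⟩⟩

end Box

section Weight

variable [Fintype G.E] {R : Type*} [CommRing R]

/-- The summand attached to the chain `levelChain α f`. -/
noncomputable def labelingWeight (q : R) (α : ℕ) (f : G.E → ℕ) : R :=
  (q - 1) ^ (G.restrictE (level f α)).bettiNat *
    q ^ ∑ k : Fin α with k.1 + 1 < α, (G.restrictE (levelChain α f k)).bettiNat

variable [Finite G.V] [LinearOrder G.E]

theorem labelingWeight_eq_prod (q : R) (α : ℕ) {f : G.E → ℕ}
    (h : IsGreedyBase G.cycleMatroid (labelKey f) T) :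
    labelingWeight q α f = ∏ a ∈ Tᶜ, localWeight q α (f a) := by
  simp only [labelingWeight, levelChain, bettiNat_restrictE_level h, prod_localWeight]

theorem sum_box_labelingWeight (q : R) (hG : G.Connected) (hT : G.IsSpanningTree T)
    (v : {e // e ∈ T} → Fin α) :
    ∑ f ∈ box T v, labelingWeight q α f = q ^ G.nT T v := by
  have hprod (g : G.E → R) : ∏ a ∈ Tᶜ, g a = ∏ a, if a ∈ T then 1 else g a := by
    simp [Finset.prod_ite, Finset.compl_eq_univ_sdiff, Finset.filter_notMem_eq_sdiff]
  calc ∑ f ∈ box T v, labelingWeight q α f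
      = ∑ f ∈ box T v, ∏ a, if a ∈ T then 1 else localWeight q α (f a) :=
        Finset.sum_congr rfl fun f hf ↦ by
          rw [labelingWeight_eq_prod q α ((mem_box_iff_isGreedyBase hG hT).1 hf).2.1, hprod]
    _ = ∏ a, if a ∈ T then 1 else q ^ (α - threshold T v a) := by
        rw [box, ← Finset.prod_univ_sum _ fun a j ↦ if a ∈ T then 1 else localWeight q α j]
        refine Finset.prod_congr rfl fun a _ ↦ ?_
        split_ifs with ha
        · simp
        · exact sum_Icc_localWeight q (threshold_le v ha)
    _ = q ^ G.nT T v := by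
        rw [← hprod, Finset.prod_pow_eq_pow_sum, nT]
        simp only [threshold, Nat.sub_sub]

end Weight

section GeneratingFunction

variable [Fintype G.E] {R : Type*} [CommRing R]

theorem finsum_pow_nT [Finite G.V] [LinearOrder G.E] (q : R) (hG : G.Connected) :
    ∑ᶠ T : {T : Finset G.E // G.IsSpanningTree T}, ∑ᶠ v : {e // e ∈ T.1} → Fin α,
        q ^ G.nT T.1 v =
      ∑ᶠ f ∈ {f : G.E → ℕ | (∀ e, f e ≤ α) ∧ (G.restrictE (level f α)).Connected},
        labelingWeight q α f := by
  have hbox (T : Finset G.E) (v : {e // e ∈ T} → Fin α) :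
      (box T v : Set (G.E → ℕ)).Finite := (box T v).finite_toSet
  rw [← iUnion_box hG, finsum_mem_iUnion (pairwise_disjoint_iUnion_box hG)
    fun T ↦ Set.finite_iUnion (hbox T.1)]
  refine finsum_congr fun T ↦ ?_
  rw [finsum_mem_iUnion (pairwise_disjoint_box T.1) (hbox T.1)]
  refine finsum_congr fun v ↦ ?_
  rw [finsum_mem_coe_finset, sum_box_labelingWeight q hG T.2]

theorem finsum_labelingWeight (q : R) (hα : 0 < α) :
    ∑ᶠ f ∈ {f : G.E → ℕ | (∀ e, f e ≤ α) ∧ (G.restrictE (level f α)).Connected},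
        labelingWeight q α f =
      ∑ᶠ c ∈ {c : Fin α → Finset G.E |
          Monotone c ∧ (G.restrictE (c ⟨α - 1, Nat.sub_one_lt_of_lt hα⟩)).Connected},
        (q - 1) ^ (G.restrictE (c ⟨α - 1, Nat.sub_one_lt_of_lt hα⟩)).bettiNat *
          q ^ ∑ k : Fin α with k.1 + 1 < α, (G.restrictE (c k)).bettiNat := by
  have hlast (f : G.E → ℕ) : levelChain α f ⟨α - 1, Nat.sub_one_lt_of_lt hα⟩ = level f α :=
    congrArg (level f) (Nat.succ_pred_eq_of_pos hα)
  refine finsum_mem_eq_of_bijOn (levelChain α) ?_ fun f _ ↦ ?_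
  · obtain ⟨hmaps, hinj, hsurj⟩ := bijOn_levelChain (ε := G.E) α
    refine ⟨fun f hf ↦ ⟨hmaps hf.1, (hlast f).symm ▸ hf.2⟩, hinj.mono fun f hf ↦ hf.1, ?_⟩
    rintro c ⟨hmono, hconn⟩
    obtain ⟨f, hf, rfl⟩ := hsurj hmono
    exact ⟨f, ⟨hf, hlast f ▸ hconn⟩, rfl⟩
  · rw [hlast, labelingWeight]

end GeneratingFunction

end Multigraph

theorem valued_spanning_tree_identity_general {R : Type*} [CommRing R] (q : R) (G : Multigraph)
    [Finite G.V] [Fintype G.E] [LinearOrder G.E] (hG : G.Connected) (α : ℕ) (hα : 0 < α) :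
    (∑ᶠ T : {T : Finset G.E // G.IsSpanningTree T},
      ∑ᶠ v : ({e : G.E // e ∈ T.1} → Fin α), q ^ G.nT T.1 v)
    =
    ∑ᶠ c : {c : Fin α → Finset G.E //
        (∀ k l : Fin α, k ≤ l → c k ⊆ c l) ∧
        (G.restrictE (c ⟨α - 1, Nat.sub_one_lt_of_lt hα⟩)).Connected},
      (q - 1) ^ (G.restrictE (c.1 ⟨α - 1, Nat.sub_one_lt_of_lt hα⟩)).bettiNat *
        q ^ (∑ k ∈ Finset.univ.filter (fun k : Fin α => k.1 + 1 < α),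
            (G.restrictE (c.1 k)).bettiNat) := by
  rw [Multigraph.finsum_pow_nT q hG, Multigraph.finsum_labelingWeight q hα]
  exact (finsum_set_coe_eq_finsum_mem _).symm

/-- For a connected graph `Q` with a fixed total order on its edges and
`α ≥ 1`, the generating function of valued spanning trees
`Σ_{(T, v : T → {0,…,α−1})} q^{n_T}` equals the toric Kac polynomial
`A_{Q,1,α}(q) = Σ_{E_1 ⊆ … ⊆ E_α ⊆ Q_1, Q|_{E_α} connected}
   (q−1)^{b(Q|_{E_α})} q^{Σ_{k<α} b(Q|_{E_k})}`. -/
theorem valued_spanning_tree_identity (G : Multigraph) [Fintype G.V] [Fintype G.E]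
    [LinearOrder G.E] (hG : G.Connected) (α : ℕ) (hα : 0 < α) :
    (∑ᶠ T : {T : Finset G.E // G.IsSpanningTree T},
      ∑ᶠ v : ({e : G.E // e ∈ T.1} → Fin α), (X : Polynomial ℤ) ^ G.nT T.1 v)
    =
    ∑ᶠ c : {c : Fin α → Finset G.E //
        (∀ k l : Fin α, k ≤ l → c k ⊆ c l) ∧
        (G.restrictE (c ⟨α - 1, by omega⟩)).Connected},
      ((X : Polynomial ℤ) - 1) ^ (G.restrictE (c.1 ⟨α - 1, by omega⟩)).bettiNat *
        (X : Polynomial ℤ) ^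
          (∑ k ∈ Finset.univ.filter (fun k : Fin α => k.1 + 1 < α),
            (G.restrictE (c.1 k)).bettiNat) :=
  valued_spanning_tree_identity_general X G hG α hα
end
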